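/- Let A(a|x) for a, x ∈ {0,1} be rank-one orthogonal projections on ℂ² with A(0|x) + A(1|x) = I₂ for each x, and let B(b|y) for b, y ∈ {0,1} be rank-one orthogonal projections on ℂ² with B(0|y) + B(1|y) = I₂ for each y. Define the 4×4 Hermitian matrix H = (1/4) Σ_{a,b,x,y ∈ {0,1}} [a + b + x·y ≡ 0 (mod 2)] · A(a|x) ⊗ B(b|y), where [·] is 1 if the congruence holds and 0 otherwise and ⊗ is the Kronecker product. Then there exists θ ∈ [3/4, (2+√2)/4] such that the eigenvalues of H, counted with multiplicity, are exactly θ, 1 − θ, 1/2 + (√2/4)·√(8θ(1−θ) − 1), and 1/2 − (√2/4)·√(8θ(1−θ) − 1). -/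

import Mathlib

open Matrix Kronecker Polynomial

/-!
Put `A x = A(0|x) - A(1|x)` and `B y = B(0|y) - B(1|y)`, which are Hermitian traceless involutions.
Then `H = 1/2 + K/8`, where `K = A 0 ⊗ (B 0 + B 1) + A 1 ⊗ (B 0 - B 1)` is the CHSH operator, and
`K ^ 2 = 4 - ⁅A 0, A 1⁆ ⊗ ⁅B 0, B 1⁆`. Commutators of 2 × 2 matrices are traceless, so by
Cayley-Hamilton they square to scalars. Hence `(4 - K ^ 2) ^ 2` is the scalar
`det ⁅A 0, A 1⁆ * det ⁅B 0, B 1⁆`. Since a traceless 4 × 4 matrix whose square has characteristic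
polynomial `q ^ 2`, `deg q = 2`, has characteristic polynomial `q (X ^ 2)`, this determines the
eigenvalues of `K` with multiplicity. Both determinants lie in `[0, 4]`, and this gives the range
of `θ`.
-/

section Quartic

variable {R : Type*} [CommRing R] [IsDomain R] [NeZero (2 : R)]

lemma monic_quartic_eq_of_mul_comp_neg_X_eq_sq {p : R[X]} {b c : R} (hmonic : p.Monic)
    (hdeg : p.natDegree = 4) (hcoeff : p.coeff 3 = 0)
    (h : p * p.comp (-X) = (X ^ 4 + C b * X ^ 2 + C c) ^ 2) :
    p = X ^ 4 + C b * X ^ 2 + C c := by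
  obtain ⟨u, v, w, rfl⟩ : ∃ u v w, p = X ^ 4 + C u * X ^ 2 + C v * X + C w := by
    refine ⟨p.coeff 2, p.coeff 1, p.coeff 0, ?_⟩
    conv_lhs => rw [hmonic.as_sum, hdeg]
    simp only [Finset.sum_range_succ, Finset.sum_range_zero, hcoeff, map_zero]
    ring
  have hexpand : X ^ 8 + C (2 * u) * X ^ 6 + C (u ^ 2 + 2 * w) * X ^ 4
        + C (2 * u * w - v ^ 2) * X ^ 2 + C (w ^ 2) =
      X ^ 8 + C (2 * b) * X ^ 6 + C (b ^ 2 + 2 * c) * X ^ 4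
        + C (2 * b * c) * X ^ 2 + C (c ^ 2) := by
    simp only [add_comp, mul_comp, pow_comp, X_comp, C_comp] at h
    simp only [map_add, map_sub, map_mul, map_pow, map_ofNat]
    linear_combination h
  have hcoeff_eq (k : ℕ) := congrArg (coeff · k) hexpand
  simp only [coeff_add, coeff_C_mul, coeff_X_pow, coeff_C] at hcoeff_eq
  have h6 : 2 * u = 2 * b := by simpa using hcoeff_eq 6
  have h4 : u ^ 2 + 2 * w = b ^ 2 + 2 * c := by simpa using hcoeff_eq 4
  have h2 : 2 * u * w - v ^ 2 = 2 * b * c := by simpa using hcoeff_eq 2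
  have two_ne : (2 : R) ≠ 0 := NeZero.ne 2
  obtain rfl : u = b := mul_left_cancel₀ two_ne h6
  obtain rfl : w = c := mul_left_cancel₀ two_ne (add_left_cancel h4)
  obtain rfl : v = 0 := by simpa using h2
  simp

end Quartic

section Charpoly

variable {R n : Type*} [CommRing R] [Fintype n] [DecidableEq n]

lemma charpoly_comp (M : Matrix n n R) (q : R[X]) :
    M.charpoly.comp q = (scalar n q - M.map C).det := by
  rw [← Matrix.eval_charpoly, Matrix.charpoly_map, eval_map, Polynomial.comp]

lemma charpoly_sq_comp_X_sq (M : Matrix n n R) :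
    (M ^ 2).charpoly.comp (X ^ 2) =
      (-1) ^ Fintype.card n * (M.charpoly * M.charpoly.comp (-X)) := by
  have hfactor : scalar n (X ^ 2) - (M ^ 2).map C =
      (scalar n X - M.map C) * -(scalar n (-X) - M.map C) := by
    have hcomm : Commute (scalar n (X : R[X])) (M.map C) :=
      scalar_commute _ (Commute.all _) _
    simp only [map_mul, map_neg, sq, Matrix.map_mul, neg_sub, sub_neg_eq_add, add_comm (M.map C)]
    exact hcomm.mul_self_sub_mul_self_eq'
  rw [charpoly_comp, charpoly_comp, hfactor, det_mul, det_neg, charpoly, charmatrix]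
  simp only [RingHom.mapMatrix_apply]
  ring

lemma charpoly_smul_one_add_smul {F : Type*} [Field F] (M : Matrix n n F) (c : F) {d : F}
    (hd : d ≠ 0) :
    (c • 1 + d • M).charpoly =
      C d ^ Fintype.card n * M.charpoly.comp (C (1 / d) * (X - C c)) := by
  have hdC : C d * C (1 / d) = 1 := by rw [← C_mul, mul_one_div_cancel hd, C_1]
  rw [charpoly_comp, ← det_smul, ← comp_X (p := charpoly _), charpoly_comp]
  congr 1
  ext1 i j
  rcases eq_or_ne i j with rfl | hij
  · simp only [scalar_apply, Matrix.sub_apply, diagonal_apply_eq, map_apply, Matrix.add_apply,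
      Matrix.smul_apply, one_apply_eq, smul_eq_mul, mul_one, C_add, C_mul]
    linear_combination (C c - X) * hdC
  · simp [hij]

lemma charpoly_of_charpoly_sq_eq_sq [IsDomain R] [NeZero (2 : R)] (hn : Fintype.card n = 4)
    {M : Matrix n n R} (htrace : M.trace = 0) {b c : R}
    (h : (M ^ 2).charpoly = (X ^ 2 + C b * X + C c) ^ 2) :
    M.charpoly = X ^ 4 + C b * X ^ 2 + C c := by
  have : Nonempty n := Fintype.card_pos_iff.1 (by lia)
  refine monic_quartic_eq_of_mul_comp_neg_X_eq_sq M.charpoly_monic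
    (M.charpoly_natDegree_eq_dim.trans hn) ?_ ?_
  · simpa [hn, htrace] using M.trace_eq_neg_charpoly_coeff.symm
  · have hsq := charpoly_sq_comp_X_sq M
    simp only [hn, h, pow_comp, add_comp, mul_comp, X_comp, C_comp] at hsq
    linear_combination -hsq

end Charpoly

section TwoByTwo

variable {R : Type*} [CommRing R]

lemma sq_eq_neg_det_smul_one_of_trace_eq_zero {A : Matrix (Fin 2) (Fin 2) R} (hA : A.trace = 0) :
    A ^ 2 = -A.det • 1 := by
  nontriviality R
  have hcayley : A ^ 2 + A.det • 1 = 0 := by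
    simpa [charpoly_fin_two, hA, Algebra.algebraMap_eq_smul_one] using A.aeval_self_charpoly
  rw [neg_smul]
  exact eq_neg_of_add_eq_zero_left hcayley

lemma det_lie_of_trace_eq_zero {A B : Matrix (Fin 2) (Fin 2) R} (hA : A.trace = 0)
    (hB : B.trace = 0) : ⁅A, B⁆.det = 4 * A.det * B.det - (A * B).trace ^ 2 := by
  rw [trace_fin_two, add_eq_zero_iff_eq_neg'] at hA hB
  simp only [Ring.lie_def, det_fin_two, trace_fin_two, Matrix.sub_apply, mul_apply,
    Fin.sum_univ_two, hA, hB]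
  ring

lemma charpoly_kronecker_of_trace_eq_zero [IsDomain R] [NeZero (2 : R)]
    {A B : Matrix (Fin 2) (Fin 2) R} (hA : A.trace = 0) (hB : B.trace = 0) :
    (A ⊗ₖ B).charpoly = (X ^ 2 - C (A.det * B.det)) ^ 2 := by
  have hsq : (A ⊗ₖ B) ^ 2 = diagonal fun _ => A.det * B.det := by
    rw [sq, ← mul_kronecker_mul, ← sq, ← sq, sq_eq_neg_det_smul_one_of_trace_eq_zero hA,
      sq_eq_neg_det_smul_one_of_trace_eq_zero hB, smul_kronecker, kronecker_smul,
      one_kronecker_one, smul_smul, neg_mul_neg, smul_one_eq_diagonal]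
  rw [charpoly_of_charpoly_sq_eq_sq (b := -2 * (A.det * B.det)) (c := (A.det * B.det) ^ 2)
    (by simp) (by simp [trace_kronecker, hA])]
  · simp only [map_mul, map_neg, map_pow, map_ofNat]
    ring
  · rw [hsq, charpoly_diagonal]
    simp only [Finset.prod_const, Finset.card_univ, Fintype.card_prod, Fintype.card_fin, map_mul,
      map_neg, map_pow, map_ofNat]
    ring

end TwoByTwo

section CHSH

variable {R m n : Type*} [CommRing R]

/-- The CHSH operator of the observables `A₀`, `A₁` of one party and `B₀`, `B₁` of the other. -/
def chshOperator (A₀ A₁ : Matrix m m R) (B₀ B₁ : Matrix n n R) : Matrix (m × n) (m × n) R :=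
  A₀ ⊗ₖ B₀ + A₀ ⊗ₖ B₁ + A₁ ⊗ₖ B₀ - A₁ ⊗ₖ B₁

lemma trace_chshOperator_of_trace_eq_zero [Fintype m] [Fintype n] {A₀ A₁ : Matrix m m R}
    (hA₀ : A₀.trace = 0) (hA₁ : A₁.trace = 0) (B₀ B₁ : Matrix n n R) :
    (chshOperator A₀ A₁ B₀ B₁).trace = 0 := by
  simp [chshOperator, trace_kronecker, hA₀, hA₁]

lemma two_smul_kronecker_add_kronecker (P₀ P₁ : Matrix m m R) (Q₀ Q₁ : Matrix n n R) :
    (2 : R) • (P₀ ⊗ₖ Q₀ + P₁ ⊗ₖ Q₁) = (P₀ + P₁) ⊗ₖ (Q₀ + Q₁) + (P₀ - P₁) ⊗ₖ (Q₀ - Q₁) := by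
  ext ⟨i, i'⟩ ⟨j, j'⟩
  simp only [Matrix.smul_apply, Matrix.add_apply, Matrix.sub_apply, kronecker_apply, smul_eq_mul]
  ring

lemma two_smul_kronecker_swap_add_kronecker_swap (P₀ P₁ : Matrix m m R) (Q₀ Q₁ : Matrix n n R) :
    (2 : R) • (P₀ ⊗ₖ Q₁ + P₁ ⊗ₖ Q₀) = (P₀ + P₁) ⊗ₖ (Q₀ + Q₁) - (P₀ - P₁) ⊗ₖ (Q₀ - Q₁) := by
  ext ⟨i, i'⟩ ⟨j, j'⟩
  simp only [Matrix.smul_apply, Matrix.add_apply, Matrix.sub_apply, kronecker_apply, smul_eq_mul]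
  ring

variable [DecidableEq m] [DecidableEq n]

lemma two_smul_sum_winning_kronecker {A : ZMod 2 → ZMod 2 → Matrix m m R}
    {B : ZMod 2 → ZMod 2 → Matrix n n R} (hA : ∀ x, A 0 x + A 1 x = 1)
    (hB : ∀ y, B 0 y + B 1 y = 1) :
    (2 : R) • ∑ a, ∑ b, ∑ x, ∑ y, (if a + b + x * y = 0 then A a x ⊗ₖ B b y else 0) =
      (4 : R) • 1 +
        chshOperator (A 0 0 - A 1 0) (A 0 1 - A 1 1) (B 0 0 - B 1 0) (B 0 1 - B 1 1) := by
  have hagree (x y : ZMod 2) := two_smul_kronecker_add_kronecker (A 0 x) (A 1 x) (B 0 y) (B 1 y)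
  have hdiffer (x y : ZMod 2) :=
    two_smul_kronecker_swap_add_kronecker_swap (A 0 x) (A 1 x) (B 0 y) (B 1 y)
  simp only [hA, hB, one_kronecker_one] at hagree hdiffer
  have hsum (f : ZMod 2 → Matrix (m × n) (m × n) R) : ∑ i, f i = f 0 + f 1 :=
    Fin.sum_univ_two f
  have one_add_one : (1 : ZMod 2) + 1 = 0 := rfl
  simp only [hsum, add_zero, zero_add, mul_zero, mul_one, one_add_one, one_ne_zero,
    if_true, if_false]
  rw [chshOperator]
  linear_combination (norm := module) hagree 0 0 + hagree 0 1 + hagree 1 0 + hdiffer 1 1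

variable [Fintype m] [Fintype n]

lemma chshOperator_sq {A₀ A₁ : Matrix m m R} {B₀ B₁ : Matrix n n R} (hA₀ : A₀ ^ 2 = 1)
    (hA₁ : A₁ ^ 2 = 1) (hB₀ : B₀ ^ 2 = 1) (hB₁ : B₁ ^ 2 = 1) :
    chshOperator A₀ A₁ B₀ B₁ ^ 2 = (4 : R) • 1 - ⁅A₀, A₁⁆ ⊗ₖ ⁅B₀, B₁⁆ := by
  have hlie : ⁅A₀, A₁⁆ ⊗ₖ ⁅B₀, B₁⁆ = (A₀ * A₁) ⊗ₖ (B₀ * B₁) - (A₀ * A₁) ⊗ₖ (B₁ * B₀)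
      - (A₁ * A₀) ⊗ₖ (B₀ * B₁) + (A₁ * A₀) ⊗ₖ (B₁ * B₀) := by
    ext ⟨i, i'⟩ ⟨j, j'⟩
    simp only [Ring.lie_def, Matrix.add_apply, Matrix.sub_apply, kronecker_apply]
    ring
  rw [sq] at hA₀ hA₁ hB₀ hB₁
  simp only [chshOperator, sq, hlie, mul_add, add_mul, mul_sub, sub_mul, ← mul_kronecker_mul, hA₀,
    hA₁, hB₀, hB₁, one_kronecker_one]
  module

end CHSH

section Qubit

/-- The algebraic part of being a `±1`-valued observable with equally many eigenvalues `1` and `-1`: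
no Hermitian condition is imposed, so that this makes sense over any semiring. -/
structure IsTracelessInvolution {R n : Type*} [Semiring R] [Fintype n] [DecidableEq n]
    (A : Matrix n n R) : Prop where
  trace_eq_zero : A.trace = 0
  sq_eq_one : A ^ 2 = 1

/-- A `±1`-valued observable whose two outcomes have spectral projections of the same rank. On a
qubit, these are the measurements with two rank-one outcomes. -/
structure IsBalancedObservable {R n : Type*} [Semiring R] [StarRing R] [Fintype n] [DecidableEq n]
    (A : Matrix n n R) : Prop extends IsTracelessInvolution A where
  isHermitian : A.IsHermitian

lemma IsTracelessInvolution.det_eq_neg_one {R : Type*} [CommRing R]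
    {A : Matrix (Fin 2) (Fin 2) R} (hA : IsTracelessInvolution A) : A.det = -1 := by
  have h := hA.sq_eq_one
  rw [sq_eq_neg_det_smul_one_of_trace_eq_zero hA.trace_eq_zero] at h
  simpa [neg_eq_iff_eq_neg] using congrFun₂ h 0 0

lemma trace_eq_rank_of_isIdempotentElem {F n : Type*} [Field F] [Fintype n] {P : Matrix n n F}
    (hP : IsIdempotentElem P) : P.trace = P.rank := by
  classical
  have hlin : IsIdempotentElem P.toLin' := hP.map Matrix.toLinAlgEquiv'
  rw [← Matrix.trace_toLin'_eq, (LinearMap.IsIdempotentElem.isProj_range _ hlin).trace]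
  rfl

lemma isBalancedObservable_sub {F n : Type*} [Field F] [StarRing F] [Fintype n] [DecidableEq n]
    {P Q : Matrix n n F} (hP : P.IsHermitian) (hP_idem : IsIdempotentElem P) (hPQ : P + Q = 1)
    (hrank : P.rank = Q.rank) : IsBalancedObservable (P - Q) := by
  obtain rfl : Q = 1 - P := eq_sub_of_add_eq' hPQ
  refine ⟨⟨?_, ?_⟩, hP.sub (isHermitian_one.sub hP)⟩
  · rw [trace_sub, trace_eq_rank_of_isIdempotentElem hP_idem,
      trace_eq_rank_of_isIdempotentElem hP_idem.one_sub, hrank, sub_self]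
  · calc
      (P - (1 - P)) ^ 2 = 4 • (P * P) - 4 • P + 1 := by noncomm_ring
      _ = 1 := by rw [hP_idem.eq, sub_self, zero_add]

lemma charpoly_chshOperator {F : Type*} [Field F] [NeZero (2 : F)]
    {A₀ A₁ B₀ B₁ : Matrix (Fin 2) (Fin 2) F} (hA₀ : IsTracelessInvolution A₀)
    (hA₁ : IsTracelessInvolution A₁) (hB₀ : IsTracelessInvolution B₀)
    (hB₁ : IsTracelessInvolution B₁) :
    (chshOperator A₀ A₁ B₀ B₁).charpoly =
      X ^ 4 - 8 * X ^ 2 + C (16 - ⁅A₀, A₁⁆.det * ⁅B₀, B₁⁆.det) := by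
  have hsq : chshOperator A₀ A₁ B₀ B₁ ^ 2 = (4 : F) • 1 + (-1 : F) • ⁅A₀, A₁⁆ ⊗ₖ ⁅B₀, B₁⁆ := by
    rw [chshOperator_sq hA₀.sq_eq_one hA₁.sq_eq_one hB₀.sq_eq_one hB₁.sq_eq_one]
    module
  rw [charpoly_of_charpoly_sq_eq_sq (b := -8) (c := 16 - ⁅A₀, A₁⁆.det * ⁅B₀, B₁⁆.det) (by simp)
    (trace_chshOperator_of_trace_eq_zero hA₀.trace_eq_zero hA₁.trace_eq_zero _ _)]
  · simp only [map_neg, map_ofNat]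
    ring
  · rw [hsq, charpoly_smul_one_add_smul _ _ (by simp),
      charpoly_kronecker_of_trace_eq_zero (LieAlgebra.matrix_trace_commutator_zero _ _ _ _)
        (LieAlgebra.matrix_trace_commutator_zero _ _ _ _)]
    simp only [Fintype.card_prod, Fintype.card_fin, Nat.reduceMul, map_neg, map_one, map_ofNat,
      div_neg_self one_ne_zero, map_mul, map_sub, pow_comp, sub_comp, X_comp, mul_comp, C_comp]
    ring

section RCLike

open scoped ComplexOrder

variable {𝕜 : Type*} [RCLike 𝕜]

lemma det_lie_nonneg {A B : Matrix (Fin 2) (Fin 2) 𝕜} (hA : A.IsHermitian) (hB : B.IsHermitian) :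
    0 ≤ ⁅A, B⁆.det := by
  have hskew : ⁅A, B⁆ᴴ = -⁅A, B⁆ := by
    simp only [Ring.lie_def, conjTranspose_sub, conjTranspose_mul, hA.eq, hB.eq, neg_sub]
  have hgram : ⁅A, B⁆ᴴ * ⁅A, B⁆ = ⁅A, B⁆.det • 1 := by
    rw [hskew, neg_mul, ← sq, sq_eq_neg_det_smul_one_of_trace_eq_zero
      (LieAlgebra.matrix_trace_commutator_zero _ _ _ _), neg_smul, neg_neg]
  simpa [hgram] using (posSemidef_conjTranspose_mul_self ⁅A, B⁆).diag_nonneg (i := 0)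

lemma det_lie_le_four {A B : Matrix (Fin 2) (Fin 2) 𝕜} (hA : IsBalancedObservable A)
    (hB : IsBalancedObservable B) : ⁅A, B⁆.det ≤ 4 := by
  have hreal : star (A * B).trace = (A * B).trace := by
    rw [← trace_conjTranspose, conjTranspose_mul, hA.isHermitian.eq, hB.isHermitian.eq,
      trace_mul_comm]
  have hdet : 4 - ⁅A, B⁆.det = star (A * B).trace * (A * B).trace := by
    rw [det_lie_of_trace_eq_zero hA.trace_eq_zero hB.trace_eq_zero, hA.det_eq_neg_one,
      hB.det_eq_neg_one, hreal]
    ring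
  exact sub_nonneg.1 (hdet ▸ star_mul_self_nonneg _)

lemma exists_det_lie_eq_ofReal {A B : Matrix (Fin 2) (Fin 2) 𝕜} (hA : IsBalancedObservable A)
    (hB : IsBalancedObservable B) : ∃ r ∈ Set.Icc (0 : ℝ) 4, ⁅A, B⁆.det = r := by
  obtain ⟨r, hr_nonneg, hr⟩ :=
    RCLike.nonneg_iff_exists_ofReal.1 (det_lie_nonneg hA.isHermitian hB.isHermitian)
  have hr_le : (r : 𝕜) ≤ (4 : ℝ) := by
    simpa only [hr, RCLike.ofReal_ofNat] using det_lie_le_four hA hB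
  exact ⟨r, ⟨hr_nonneg, RCLike.ofReal_le_ofReal.1 hr_le⟩, hr.symm⟩

lemma exists_charpoly_chshOperator_eq {A₀ A₁ B₀ B₁ : Matrix (Fin 2) (Fin 2) 𝕜}
    (hA₀ : IsBalancedObservable A₀) (hA₁ : IsBalancedObservable A₁)
    (hB₀ : IsBalancedObservable B₀) (hB₁ : IsBalancedObservable B₁) :
    ∃ ω ∈ Set.Icc (0 : ℝ) 1,
      (chshOperator A₀ A₁ B₀ B₁).charpoly = X ^ 4 - 8 * X ^ 2 + C (16 * (1 - (ω : 𝕜))) := by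
  obtain ⟨r, hr, hdetA⟩ := exists_det_lie_eq_ofReal hA₀ hA₁
  obtain ⟨s, hs, hdetB⟩ := exists_det_lie_eq_ofReal hB₀ hB₁
  refine ⟨(r / 4) * (s / 4), unitInterval.mul_mem ?_ ?_, ?_⟩
  · exact ⟨by linarith [hr.1], by linarith [hr.2]⟩
  · exact ⟨by linarith [hs.1], by linarith [hs.2]⟩
  · rw [charpoly_chshOperator hA₀.1 hA₁.1 hB₀.1 hB₁.1, hdetA, hdetB]
    congr 2
    push_cast
    ring

end RCLike

end Qubit

section WinningProbability

lemma exists_mem_Icc_biquadratic_eq {ω : ℝ} (hω : ω ∈ Set.Icc 0 1) :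
    ∃ θ ∈ Set.Icc (3 / 4 : ℝ) ((2 + √2) / 4),
      (θ - 1 / 2) ^ 2 * (1 / 8 - (θ - 1 / 2) ^ 2) = (1 - ω) / 256 := by
  have hω_le : √ω ≤ 1 := Real.sqrt_le_one.2 hω.2
  have hsq : √(1 + √ω) ^ 2 = 1 + √ω := Real.sq_sqrt (by positivity)
  refine ⟨1 / 2 + √(1 + √ω) / 4, ⟨?_, ?_⟩, ?_⟩
  · linarith [Real.one_le_sqrt.2 (le_add_of_nonneg_right (a := 1) ω.sqrt_nonneg)]
  · linarith [Real.sqrt_le_sqrt (show 1 + √ω ≤ 2 by linarith)]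
  · linear_combination ((-√(1 + √ω) ^ 2 + 1 - √ω) * hsq - Real.sq_sqrt hω.1) / 256

lemma charpoly_half_smul_one_add_eighth_smul {F n : Type*} [Field F] [NeZero (2 : F)] [Fintype n]
    [DecidableEq n] (hn : Fintype.card n = 4) {K : Matrix n n F} {ω : F}
    (hK : K.charpoly = X ^ 4 - 8 * X ^ 2 + C (16 * (1 - ω))) :
    ((1 / 2 : F) • 1 + (1 / 8 : F) • K).charpoly =
      (X - C (1 / 2)) ^ 4 - C (1 / 8) * (X - C (1 / 2)) ^ 2 + C ((1 - ω) / 256) := by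
  have two_ne : (2 : F) ≠ 0 := NeZero.ne 2
  have eight_eq : (8 : F) = 2 ^ 3 := by norm_num
  have eight_ne : (8 : F) ≠ 0 := eight_eq ▸ pow_ne_zero 3 two_ne
  rw [charpoly_smul_one_add_smul _ _ (one_div_ne_zero eight_ne), hK, hn, one_div_one_div]
  have hconst : C ((1 - ω) / 256) = C (1 / 8) ^ 4 * C (16 * (1 - ω)) := by
    rw [← C_pow, ← C_mul, eight_eq, show (256 : F) = 2 ^ 8 by norm_num]
    congr 1
    field
  have eight_mul : 8 * C (1 / 8 : F) = 1 := by
    rw [← map_ofNat C, ← C_mul, mul_one_div_cancel eight_ne, C_1]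
  simp only [hconst, add_comp, sub_comp, mul_comp, pow_comp, X_comp, C_comp, ofNat_comp, map_ofNat]
  generalize X - C (1 / 2 : F) = Y, C (1 / 8 : F) = e at eight_mul ⊢
  linear_combination (Y ^ 4 * (512 * e ^ 3 + 64 * e ^ 2 + 8 * e + 1)
    - e * Y ^ 2 * (64 * e ^ 2 + 8 * e + 1)) * eight_mul

lemma prod_X_sub_C_eq_biquadratic {θ : ℝ} (hθ : θ ∈ Set.Icc (1 / 2 : ℝ) ((2 + √2) / 4)) :
    (X - C θ) * (X - C (1 - θ)) * (X - C (1 / 2 + √2 / 4 * √(8 * θ * (1 - θ) - 1))) *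
        (X - C (1 / 2 - √2 / 4 * √(8 * θ * (1 - θ) - 1))) =
      (X - C (1 / 2)) ^ 4 - C (1 / 8) * (X - C (1 / 2)) ^ 2 +
        C ((θ - 1 / 2) ^ 2 * (1 / 8 - (θ - 1 / 2) ^ 2)) := by
  have hsqrt_two : √2 ^ 2 = 2 := Real.sq_sqrt zero_le_two
  have hradicand : 0 ≤ 8 * θ * (1 - θ) - 1 := by
    nlinarith [mul_nonneg (sub_nonneg.2 hθ.1) (sub_nonneg.2 hθ.2), Real.sqrt_nonneg 2]
  have hsq : (√2 / 4 * √(8 * θ * (1 - θ) - 1)) ^ 2 = 1 / 8 - (θ - 1 / 2) ^ 2 := by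
    rw [mul_pow, div_pow, hsqrt_two, Real.sq_sqrt hradicand]
    ring
  generalize √2 / 4 * √(8 * θ * (1 - θ) - 1) = δ at hsq ⊢
  refine Polynomial.funext fun z => ?_
  simp only [eval_add, eval_sub, eval_mul, eval_pow, eval_X, eval_C]
  linear_combination ((θ - 1 / 2) ^ 2 - (z - 1 / 2) ^ 2) * hsq

end WinningProbability

/-- For rank-one orthogonal projections `A(a|x)`, `B(b|y)` on ℂ² with
`A(0|x) + A(1|x) = I` and `B(0|y) + B(1|y) = I`, the CHSH-game operator
`H = (1/4) Σ_{a+b+xy ≡ 0 (2)} A(a|x) ⊗ B(b|y)` has eigenvalues (with multiplicity)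
`θ, 1-θ, 1/2 ± (√2/4)√(8θ(1-θ)-1)` for some `θ ∈ [3/4, (2+√2)/4]`, expressed via its
characteristic polynomial. -/
theorem stmt_13 (A B : ZMod 2 → ZMod 2 → Matrix (Fin 2) (Fin 2) ℂ)
    (hAherm : ∀ a x, (A a x).IsHermitian)
    (hAproj : ∀ a x, A a x * A a x = A a x)
    (hArank : ∀ a x, (A a x).rank = 1)
    (hAsum : ∀ x, A 0 x + A 1 x = 1)
    (hBherm : ∀ b y, (B b y).IsHermitian)
    (hBproj : ∀ b y, B b y * B b y = B b y)
    (hBrank : ∀ b y, (B b y).rank = 1)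
    (hBsum : ∀ y, B 0 y + B 1 y = 1)
    (H : Matrix (Fin 2 × Fin 2) (Fin 2 × Fin 2) ℂ)
    (hH : H = (1 / 4 : ℂ) • ∑ a : ZMod 2, ∑ b : ZMod 2, ∑ x : ZMod 2, ∑ y : ZMod 2,
      if a + b + x * y = 0 then A a x ⊗ₖ B b y else 0) :
    ∃ θ ∈ Set.Icc (3 / 4 : ℝ) ((2 + Real.sqrt 2) / 4),
      H.charpoly =
        (X - C (θ : ℂ)) * (X - C ((1 - θ : ℝ) : ℂ)) *
        (X - C ((1 / 2 + (Real.sqrt 2 / 4) * Real.sqrt (8 * θ * (1 - θ) - 1) : ℝ) : ℂ)) *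
        (X - C ((1 / 2 - (Real.sqrt 2 / 4) * Real.sqrt (8 * θ * (1 - θ) - 1) : ℝ) : ℂ)) := by
  have hA_obs (x) : IsBalancedObservable (A 0 x - A 1 x) :=
    isBalancedObservable_sub (hAherm 0 x) (hAproj 0 x) (hAsum x) (by rw [hArank, hArank])
  have hB_obs (y) : IsBalancedObservable (B 0 y - B 1 y) :=
    isBalancedObservable_sub (hBherm 0 y) (hBproj 0 y) (hBsum y) (by rw [hBrank, hBrank])
  obtain ⟨ω, hω, hK⟩ := exists_charpoly_chshOperator_eq (hA_obs 0) (hA_obs 1) (hB_obs 0) (hB_obs 1)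
  obtain ⟨θ, hθ, hθω⟩ := exists_mem_Icc_biquadratic_eq hω
  refine ⟨θ, hθ, ?_⟩
  have hH_eq : H = (1 / 2 : ℂ) • 1 + (1 / 8 : ℂ) •
      chshOperator (A 0 0 - A 1 0) (A 0 1 - A 1 1) (B 0 0 - B 1 0) (B 0 1 - B 1 1) := by
    rw [hH]
    linear_combination (norm := module) (1 / 8 : ℂ) • two_smul_sum_winning_kronecker hAsum hBsum
  have hfactor := congrArg (Polynomial.map Complex.ofRealHom)
    (prod_X_sub_C_eq_biquadratic ⟨by linarith [hθ.1], hθ.2⟩)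
  rw [hθω] at hfactor
  rw [hH_eq, charpoly_half_smul_one_add_eighth_smul (by simp) hK]
  simpa using hfactor.symm
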